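/- Consider the zipper DAG: two disjoint groups A = {a_1,…,a_d} and B = {b_1,…,b_d} of source nodes, and a chain c_1, …, c_ℓ where c_1 has in-edges from all of A, and for i ≥ 2, node c_i has in-edges from c_{i−1} and from all of A if i is odd and all of B if i is even. For d ≥ 3, r = d + 2, and ℓ sufficiently large, the optimal one-shot RBP cost is at least d·(ℓ − O(1)) − O(d) while there is a PRBP strategy of cost at most 2ℓ + O(d); in particular OPT_PRBP < OPT_RBP. -/

import Mathlib

open scoped Classical

/-! ### Directed graphs / DAGs -/

structure DirGraph (V : Type) where
  E : V → V → Prop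

namespace DirGraph

variable {V : Type}

def Acyclic (G : DirGraph V) : Prop := ∀ v, ¬ Relation.TransGen G.E v v

def IsSource (G : DirGraph V) (v : V) : Prop := ∀ u, ¬ G.E u v

def IsSink (G : DirGraph V) (v : V) : Prop := ∀ u, ¬ G.E v u

def NoIsolated (G : DirGraph V) : Prop := ∀ v, (∃ u, G.E u v) ∨ (∃ u, G.E v u)

noncomputable def inDeg (G : DirGraph V) (v : V) : ℕ := {u | G.E u v}.ncard

noncomputable def outDeg (G : DirGraph V) (v : V) : ℕ := {u | G.E v u}.ncard

noncomputable def maxInDeg (G : DirGraph V) [Fintype V] : ℕ :=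
  Finset.univ.sup G.inDeg

noncomputable def maxOutDeg (G : DirGraph V) [Fintype V] : ℕ :=
  Finset.univ.sup G.outDeg

end DirGraph

/-! ### The (one-shot) red-blue pebble game (RBP) -/

structure RBPState (V : Type) where
  red : Finset V
  blue : Finset V
  computed : Finset V

inductive RBPMove (V : Type) where
  | save : V → RBPMove V
  | load : V → RBPMove V
  | compute : V → RBPMove V
  | delete : V → RBPMove V

def RBPMove.ioCost {V : Type} : RBPMove V → ℕ
  | .save _ => 1
  | .load _ => 1
  | _ => 0

variable {V : Type} [Fintype V] [DecidableEq V]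

def RBPStep (G : DirGraph V) (r : ℕ) (s : RBPState V) :
    RBPMove V → RBPState V → Prop
  | .save v, t => v ∈ s.red ∧ t = { s with blue := insert v s.blue }
  | .load v, t => v ∈ s.blue ∧ (insert v s.red).card ≤ r ∧
      t = { s with red := insert v s.red }
  | .compute v, t => ¬ G.IsSource v ∧ v ∉ s.computed ∧
      (∀ u, G.E u v → u ∈ s.red) ∧ (insert v s.red).card ≤ r ∧
      t = { s with red := insert v s.red, computed := insert v s.computed }
  | .delete v, t => v ∈ s.red ∧ t = { s with red := s.red.erase v }

inductive RBPReaches (G : DirGraph V) (r : ℕ) :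
    RBPState V → List (RBPMove V) → RBPState V → Prop
  | nil (s : RBPState V) : RBPReaches G r s [] s
  | cons {s t u : RBPState V} {m : RBPMove V} {L : List (RBPMove V)} :
      RBPStep G r s m t → RBPReaches G r t L u → RBPReaches G r s (m :: L) u

noncomputable def RBPInit (G : DirGraph V) : RBPState V :=
  ⟨∅, Finset.univ.filter (fun v => G.IsSource v), ∅⟩

def RBPValid (G : DirGraph V) (r : ℕ) (L : List (RBPMove V)) : Prop :=
  ∃ t, RBPReaches G r (RBPInit G) L t ∧ ∀ v, G.IsSink v → v ∈ t.blue

def RBPCost {V : Type} (L : List (RBPMove V)) : ℕ := (L.map RBPMove.ioCost).sum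

noncomputable def optRBP (G : DirGraph V) (r : ℕ) : ℕ∞ :=
  sInf ((fun L => (RBPCost L : ℕ∞)) '' {L | RBPValid G r L})

/-! ### The partial-computing red-blue pebble game (PRBP) -/

structure PRBPState (V : Type) where
  lred : Finset V
  dred : Finset V
  blue : Finset V
  marked : Finset (V × V)

def PRBPState.red (s : PRBPState V) : Finset V := s.lred ∪ s.dred

inductive PRBPMove (V : Type) where
  | save : V → PRBPMove V
  | load : V → PRBPMove V
  | pcompute : V → V → PRBPMove V
  | delete : V → PRBPMove V

def PRBPMove.ioCost {V : Type} : PRBPMove V → ℕ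
  | .save _ => 1
  | .load _ => 1
  | _ => 0

def PRBPStep (G : DirGraph V) (r : ℕ) (s : PRBPState V) :
    PRBPMove V → PRBPState V → Prop
  | .save v, t => v ∈ s.dred ∧
      t = { s with lred := insert v s.lred, dred := s.dred.erase v,
                   blue := insert v s.blue }
  | .load v, t => v ∈ s.blue ∧ ((insert v s.lred) ∪ s.dred).card ≤ r ∧
      t = { s with lred := insert v s.lred }
  | .pcompute u v, t => G.E u v ∧ (u, v) ∉ s.marked ∧
      (∀ w, G.E w u → (w, u) ∈ s.marked) ∧ u ∈ s.red ∧
      (v ∈ s.red ∨ (v ∉ s.red ∧ v ∉ s.blue)) ∧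
      ((s.lred.erase v) ∪ (insert v s.dred)).card ≤ r ∧
      t = { s with lred := s.lred.erase v, dred := insert v s.dred,
                   blue := s.blue.erase v, marked := insert (u, v) s.marked }
  | .delete v, t =>
      (v ∈ s.lred ∧ t = { s with lred := s.lred.erase v }) ∨
      (v ∈ s.dred ∧ (∀ w, G.E v w → (v, w) ∈ s.marked) ∧
        t = { s with dred := s.dred.erase v })

inductive PRBPReaches (G : DirGraph V) (r : ℕ) :
    PRBPState V → List (PRBPMove V) → PRBPState V → Prop
  | nil (s : PRBPState V) : PRBPReaches G r s [] s
  | cons {s t u : PRBPState V} {m : PRBPMove V} {L : List (PRBPMove V)} :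
      PRBPStep G r s m t → PRBPReaches G r t L u → PRBPReaches G r s (m :: L) u

noncomputable def PRBPInit (G : DirGraph V) : PRBPState V :=
  ⟨∅, ∅, Finset.univ.filter (fun v => G.IsSource v), ∅⟩

def PRBPValid (G : DirGraph V) (r : ℕ) (L : List (PRBPMove V)) : Prop :=
  ∃ t, PRBPReaches G r (PRBPInit G) L t ∧ (∀ v, G.IsSink v → v ∈ t.blue) ∧
    ∀ u v, G.E u v → (u, v) ∈ t.marked

def PRBPCost {V : Type} (L : List (PRBPMove V)) : ℕ := (L.map PRBPMove.ioCost).sum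

noncomputable def optPRBP (G : DirGraph V) (r : ℕ) : ℕ∞ :=
  sInf ((fun L => (PRBPCost L : ℕ∞)) '' {L | PRBPValid G r L})

/-- `s` is a state reached by some prefix of the pebbling `L`. -/
def PRBPPrefixState (G : DirGraph V) (r : ℕ) (L : List (PRBPMove V))
    (s : PRBPState V) : Prop :=
  ∃ L₁ L₂, L = L₁ ++ L₂ ∧ PRBPReaches G r (PRBPInit G) L₁ s

/-! ### Paths, dominators, S-partitions -/

/-- A directed path in `G` starting at a source node. -/
def IsSourcePath (G : DirGraph V) (p : List V) : Prop :=
  p ≠ [] ∧ p.Chain' G.E ∧ ∀ h : p ≠ [], G.IsSource (p.head h)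

/-- `D` is a dominator for the node set `V₀`. -/
def Dominates (G : DirGraph V) (D : Set V) (V₀ : Set V) : Prop :=
  ∀ p : List V, IsSourcePath G p → ∀ h : p ≠ [], p.getLast h ∈ V₀ →
    ∃ d ∈ D, d ∈ p

/-- The path `p` contains an edge of `E₀` (two consecutive nodes forming it). -/
def PathContainsEdge (p : List V) (E₀ : Set (V × V)) : Prop :=
  ∃ u v, (u, v) ∈ E₀ ∧ [u, v] <:+: p

/-- `D` is an edge-dominator for the edge set `E₀`. -/
def EdgeDominates (G : DirGraph V) (D : Set V) (E₀ : Set (V × V)) : Prop :=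
  ∀ p : List V, IsSourcePath G p → PathContainsEdge p E₀ → ∃ d ∈ D, d ∈ p

/-- The terminal set of a node set `V₀`: nodes of `V₀` with no out-neighbor in `V₀`. -/
def terminalSet (G : DirGraph V) (V₀ : Set V) : Set V :=
  {v | v ∈ V₀ ∧ ∀ w, G.E v w → w ∉ V₀}

/-- The edge-terminal set of an edge set `E₀`. -/
def edgeTerminalSet (E₀ : Set (V × V)) : Set V :=
  {v | (∃ u, (u, v) ∈ E₀) ∧ ∀ w, (v, w) ∉ E₀}

/-- An `S`-partition of the DAG `G` (Hong–Kung). -/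
def IsSPartition (G : DirGraph V) (S : ℕ) (k : ℕ) (P : Fin k → Set V) : Prop :=
  (∀ v : V, ∃! i, v ∈ P i) ∧
  (∀ i j : Fin k, j < i → ∀ u v, u ∈ P i → v ∈ P j → ¬ G.E u v) ∧
  (∀ i, ∃ D : Set V, D.ncard ≤ S ∧ Dominates G D (P i)) ∧
  (∀ i, (terminalSet G (P i)).ncard ≤ S)

/-- An `S`-dominator partition of the DAG `G`: an `S`-partition without the
terminal-set condition. -/
def IsSDomPartition (G : DirGraph V) (S : ℕ) (k : ℕ) (P : Fin k → Set V) : Prop :=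
  (∀ v : V, ∃! i, v ∈ P i) ∧
  (∀ i j : Fin k, j < i → ∀ u v, u ∈ P i → v ∈ P j → ¬ G.E u v) ∧
  (∀ i, ∃ D : Set V, D.ncard ≤ S ∧ Dominates G D (P i))

/-- An `S`-edge partition of the DAG `G`. -/
def IsSEdgePartition (G : DirGraph V) (S : ℕ) (k : ℕ)
    (P : Fin k → Set (V × V)) : Prop :=
  (∀ i, P i ⊆ {e | G.E e.1 e.2}) ∧
  (∀ u v, G.E u v → ∃! i, (u, v) ∈ P i) ∧
  (∀ i j : Fin k, i < j → ∀ u v w, G.E u v → G.E v w →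
      ¬ ((v, w) ∈ P i ∧ (u, v) ∈ P j)) ∧
  (∀ i, ∃ D : Set V, D.ncard ≤ S ∧ EdgeDominates G D (P i)) ∧
  (∀ i, (edgeTerminalSet (P i)).ncard ≤ S)

noncomputable def minEdgePartition (G : DirGraph V) (S : ℕ) : ℕ :=
  sInf {k | ∃ P : Fin k → Set (V × V), IsSEdgePartition G S k P}

noncomputable def minDomPartition (G : DirGraph V) (S : ℕ) : ℕ :=
  sInf {k | ∃ P : Fin k → Set V, IsSDomPartition G S k P}

noncomputable def minSPartition (G : DirGraph V) (S : ℕ) : ℕ :=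
  sInf {k | ∃ P : Fin k → Set V, IsSPartition G S k P}
/-- The zipper DAG: two groups `A`, `B` of `d` source nodes and a chain
`c_0, …, c_{ℓ-1}` where `c_i` has in-edges from `c_{i-1}` and from all of `A`
if `i` is even, and from all of `B` if `i` is odd (so the 1-indexed `c_1` gets
all of `A`, and groups alternate along the chain). -/
def ZipG (d ℓ : ℕ) : DirGraph (Fin d ⊕ (Fin d ⊕ Fin ℓ)) :=
  ⟨fun a b =>
    match a, b with
    | .inl _, .inr (.inr i) => (i : ℕ) % 2 = 0
    | .inr (.inl _), .inr (.inr i) => (i : ℕ) % 2 = 1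
    | .inr (.inr i), .inr (.inr i') => (i : ℕ) + 1 = (i' : ℕ)
    | _, _ => False⟩

/-! ### Lower bound for RBP -/

/-- The membership of a node in the source group needed by the `k`-th chain node. -/
def zipGrp (d ℓ k : ℕ) : (Fin d ⊕ (Fin d ⊕ Fin ℓ)) → Prop
  | .inl _ => k % 2 = 0
  | .inr (.inl _) => k % 2 = 1
  | .inr (.inr _) => False

lemma zipGrp_edge {d ℓ : ℕ} (i : Fin ℓ) (u : Fin d ⊕ (Fin d ⊕ Fin ℓ))
    (h : zipGrp d ℓ i u) : (ZipG d ℓ).E u (.inr (.inr i)) := by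
  rcases u with u | u | u <;> simpa [zipGrp, ZipG] using h

lemma zipGrp_card {d ℓ k : ℕ} :
    (Finset.univ.filter (zipGrp d ℓ k)).card = d := by
  rcases Nat.mod_two_eq_zero_or_one k with h | h
  · have : Finset.univ.filter (zipGrp d ℓ k) =
        (Finset.univ : Finset (Fin d)).map ⟨Sum.inl, Sum.inl_injective⟩ := by
      ext u; rcases u with u | u | u <;> simp [zipGrp, h]
    rw [this]; simp
  · have : Finset.univ.filter (zipGrp d ℓ k) =
        (Finset.univ : Finset (Fin d)).map
          ⟨fun m => Sum.inr (Sum.inl m), fun a b hab => by simpa using hab⟩ := by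
      ext u
      rw [Finset.mem_map]
      rcases u with u | u | u
      · simp only [Finset.mem_filter, Finset.mem_univ, true_and, zipGrp, h]
        exact ⟨fun h => absurd h (by norm_num), fun ⟨a, ha⟩ => by cases ha⟩
      · simp only [Finset.mem_filter, Finset.mem_univ, true_and, zipGrp, h]
        exact ⟨fun _ => ⟨u, rfl⟩, fun _ => trivial⟩
      · simp only [Finset.mem_filter, Finset.mem_univ, true_and, zipGrp]
        exact ⟨False.elim, fun ⟨a, ha⟩ => by cases ha⟩
    rw [this]; simp

lemma zipGrp_succ {d ℓ k : ℕ} (u : Fin d ⊕ (Fin d ⊕ Fin ℓ))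
    (h : zipGrp d ℓ k u) : ¬ zipGrp d ℓ (k + 1) u := by
  rcases u with u | u | u <;> simp [zipGrp] at * <;> omega

/-- Invariant of RBP pebblings of the zipper. -/
def ZInv (d ℓ : ℕ) (s : RBPState (Fin d ⊕ (Fin d ⊕ Fin ℓ))) (n : ℕ) : Prop :=
  ∃ k, k ≤ ℓ ∧ (∀ i : Fin ℓ, Sum.inr (Sum.inr i) ∈ s.computed ↔ (i : ℕ) < k) ∧
    (∀ i : Fin ℓ, Sum.inr (Sum.inr i) ∈ s.red → (i : ℕ) < k) ∧
    (∀ i : Fin ℓ, Sum.inr (Sum.inr i) ∈ s.blue → (i : ℕ) < k) ∧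
    d * (k - 1) + (s.red.filter (zipGrp d ℓ k)).card ≤ n

lemma ZInv_step {d ℓ : ℕ} (hd : 3 ≤ d) {s t : RBPState (Fin d ⊕ (Fin d ⊕ Fin ℓ))} {n : ℕ}
    {m : RBPMove (Fin d ⊕ (Fin d ⊕ Fin ℓ))}
    (h : ZInv d ℓ s n) (hs : RBPStep (ZipG d ℓ) (d + 2) s m t) :
    ZInv d ℓ t (n + m.ioCost) := by
  obtain ⟨k, hk, hc, hr, hb, hn⟩ := h
  cases m with
  | save v =>
    obtain ⟨hv, rfl⟩ := hs
    refine ⟨k, hk, hc, hr, ?_, by simp [RBPMove.ioCost]; omega⟩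
    intro i hi
    rcases Finset.mem_insert.1 hi with rfl | hi
    · exact hr i hv
    · exact hb i hi
  | load v =>
    obtain ⟨hv, -, rfl⟩ := hs
    refine ⟨k, hk, hc, ?_, hb, ?_⟩
    · intro i hi
      rcases Finset.mem_insert.1 hi with rfl | hi
      · exact hb i hv
      · exact hr i hi
    · have : ((insert v s.red).filter (zipGrp d ℓ k)).card ≤
          (s.red.filter (zipGrp d ℓ k)).card + 1 := by
        refine le_trans (Finset.card_le_card ?_) (Finset.card_insert_le v _)
        intro x hx
        simp only [Finset.mem_filter, Finset.mem_insert] at hx ⊢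
        tauto
      simp only [RBPMove.ioCost]
      omega
  | delete v =>
    obtain ⟨hv, rfl⟩ := hs
    refine ⟨k, hk, hc, fun i hi => hr i (Finset.mem_of_mem_erase hi), hb, ?_⟩
    have : ((s.red.erase v).filter (zipGrp d ℓ k)).card ≤
          (s.red.filter (zipGrp d ℓ k)).card :=
      Finset.card_le_card (Finset.filter_subset_filter _ (Finset.erase_subset _ _))
    simp only [RBPMove.ioCost]
    omega
  | compute v =>
    obtain ⟨hsrc, hv, hE, hcard, rfl⟩ := hs
    rcases v with v | v | i
    · exact absurd (fun u => by rcases u with u | u | u <;> simp [ZipG]) hsrc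
    · exact absurd (fun u => by rcases u with u | u | u <;> simp [ZipG]) hsrc
    have hik : (i : ℕ) = k := by
      have h1 : ¬ (i : ℕ) < k := fun h => hv ((hc i).2 h)
      rcases Nat.eq_zero_or_pos (i : ℕ) with h0 | h0
      · omega
      · have := hr ⟨i - 1, by omega⟩ (hE _ (by simp [ZipG]; omega))
        simp at this
        omega
    subst hik
    have hired : Sum.inr (Sum.inr i) ∉ s.red := fun h => by simpa using hr i h
    have hG : Finset.univ.filter (zipGrp d ℓ i) ⊆ s.red := by
      intro u hu
      exact hE u (zipGrp_edge i u (Finset.mem_filter.1 hu).2)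
    have hGf : s.red.filter (zipGrp d ℓ i) = Finset.univ.filter (zipGrp d ℓ i) := by
      ext u
      simp only [Finset.mem_filter, Finset.mem_univ, true_and, and_iff_right_iff_imp]
      exact fun hu => hG (by simpa using hu)
    rw [hGf, zipGrp_card] at hn
    rw [Finset.card_insert_of_notMem hired] at hcard
    refine ⟨i + 1, i.2, ?_, ?_, ?_, ?_⟩
    · intro j
      simp only [Finset.mem_insert, hc, Sum.inr.injEq, Fin.ext_iff]
      omega
    · intro j hj
      rcases Finset.mem_insert.1 hj with hj | hj
      · simp only [Sum.inr.injEq, Fin.ext_iff] at hj; omega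
      · have := hr j hj; omega
    · intro j hj
      have := hb j hj; omega
    · simp only [RBPMove.ioCost]
      have hins : (insert (Sum.inr (Sum.inr i)) s.red).filter (zipGrp d ℓ (i + 1)) =
          s.red.filter (zipGrp d ℓ (i + 1)) := by
        rw [Finset.filter_insert, if_neg (by simp [zipGrp])]
      rw [hins]
      have hdisj : Disjoint (Finset.univ.filter (zipGrp d ℓ i))
          (s.red.filter (zipGrp d ℓ (i + 1))) := by
        rw [Finset.disjoint_left]
        intro u hu hu'
        exact zipGrp_succ u (Finset.mem_filter.1 hu).2 (Finset.mem_filter.1 hu').2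
      rcases Nat.eq_zero_or_pos (i : ℕ) with h0 | h0
      · have h1 : (Finset.univ.filter (zipGrp d ℓ i) ∪
            s.red.filter (zipGrp d ℓ (i + 1))).card ≤ s.red.card :=
          Finset.card_le_card (Finset.union_subset hG (Finset.filter_subset _ _))
        rw [Finset.card_union_of_disjoint hdisj, zipGrp_card] at h1
        simp only [h0, zero_add, Nat.sub_self, mul_zero] at *
        omega
      · have hpred := hE (Sum.inr (Sum.inr ⟨i - 1, by omega⟩)) (by simp [ZipG]; omega)
        have h1 : (insert (Sum.inr (Sum.inr (⟨i - 1, by omega⟩ : Fin ℓ)))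
            (Finset.univ.filter (zipGrp d ℓ i) ∪
            s.red.filter (zipGrp d ℓ (i + 1)))).card ≤ s.red.card :=
          Finset.card_le_card (Finset.insert_subset hpred
            (Finset.union_subset hG (Finset.filter_subset _ _)))
        rw [Finset.card_insert_of_notMem (by simp [zipGrp]),
          Finset.card_union_of_disjoint hdisj, zipGrp_card] at h1
        have h2 : d * ((i : ℕ) + 1 - 1) = d * ((i : ℕ) - 1) + d := by
          obtain ⟨j, hj⟩ : ∃ j, (i : ℕ) = j + 1 := ⟨i - 1, by omega⟩
          rw [hj]; simp; ring
        omega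

lemma ZInv_reaches {d ℓ : ℕ} (hd : 3 ≤ d) {s t : RBPState (Fin d ⊕ (Fin d ⊕ Fin ℓ))}
    {L : List (RBPMove (Fin d ⊕ (Fin d ⊕ Fin ℓ)))}
    (hL : RBPReaches (ZipG d ℓ) (d + 2) s L t) :
    ∀ n, ZInv d ℓ s n → ZInv d ℓ t (n + RBPCost L) := by
  induction hL with
  | nil s => intro n h; simpa [RBPCost] using h
  | cons hs _ ih =>
    intro n h
    have := ih _ (ZInv_step hd h hs)
    simpa [RBPCost, add_assoc] using this

lemma zip_lower {d ℓ : ℕ} (hd : 3 ≤ d) (hℓ : 2 ≤ ℓ) :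
    ((d * (ℓ - 1) : ℕ) : ℕ∞) ≤ optRBP (ZipG d ℓ) (d + 2) := by
  refine le_sInf ?_
  rintro _ ⟨L, ⟨t, hL, hsink⟩, rfl⟩
  have h0 : ZInv d ℓ (RBPInit (ZipG d ℓ)) 0 := by
    refine ⟨0, Nat.zero_le _, by simp [RBPInit], by simp [RBPInit], ?_, by simp [RBPInit]⟩
    intro i hi
    have hi := (Finset.mem_filter.1 hi).2
    exfalso
    rcases Nat.mod_two_eq_zero_or_one (i : ℕ) with h | h
    · exact hi (Sum.inl ⟨0, by omega⟩) (by simpa [ZipG] using h)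
    · exact hi (Sum.inr (Sum.inl ⟨0, by omega⟩)) (by simpa [ZipG] using h)
  obtain ⟨k, hk, hc, hr, hb, hn⟩ := ZInv_reaches hd hL 0 h0
  have hlast := hb ⟨ℓ - 1, by omega⟩ (hsink _ (by
    intro u
    rcases u with u | u | u <;> simp [ZipG]
    omega))
  have : k = ℓ := by simp at hlast; omega
  subst this
  have : d * (k - 1) ≤ RBPCost L := by omega
  show ((d * (k - 1) : ℕ) : ℕ∞) ≤ ((RBPCost L : ℕ) : ℕ∞)
  exact_mod_cast this

/-! ### Upper bound for PRBP -/

section Go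
variable {W : Type} [DecidableEq W]

/-- `t` can be reached from `s` with cost at most `n`. -/
def Go (G : DirGraph W) (r : ℕ) (s : PRBPState W) (n : ℕ) (t : PRBPState W) : Prop :=
  ∃ L, PRBPReaches G r s L t ∧ PRBPCost L ≤ n

lemma PRBPReaches.append {G : DirGraph W} {r : ℕ} {s t u : PRBPState W}
    {L L' : List (PRBPMove W)} (h : PRBPReaches G r s L t) (h' : PRBPReaches G r t L' u) :
    PRBPReaches G r s (L ++ L') u := by
  induction h with
  | nil s => exact h'
  | cons hs _ ih => exact .cons hs (ih h')

lemma Go.refl {G : DirGraph W} {r : ℕ} (s : PRBPState W) : Go G r s 0 s :=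
  ⟨[], .nil s, by simp [PRBPCost]⟩

lemma Go.trans {G : DirGraph W} {r : ℕ} {s t u : PRBPState W} {n m : ℕ}
    (h : Go G r s n t) (h' : Go G r t m u) : Go G r s (n + m) u := by
  obtain ⟨L, hL, hn⟩ := h
  obtain ⟨L', hL', hm⟩ := h'
  refine ⟨L ++ L', hL.append hL', ?_⟩
  simp only [PRBPCost, List.map_append, List.sum_append] at *
  omega

lemma Go.mono {G : DirGraph W} {r : ℕ} {s t : PRBPState W} {n m : ℕ}
    (h : Go G r s n t) (hm : n ≤ m) : Go G r s m t := by
  obtain ⟨L, hL, hn⟩ := h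
  exact ⟨L, hL, hn.trans hm⟩

lemma Go.single {G : DirGraph W} {r : ℕ} {s t : PRBPState W} (m : PRBPMove W)
    (h : PRBPStep G r s m t) : Go G r s m.ioCost t :=
  ⟨[m], .cons h (.nil t), by simp [PRBPCost]⟩

lemma Go.iter {G : DirGraph W} {r : ℕ} (S : ℕ → PRBPState W) (c : ℕ) (n : ℕ)
    (h : ∀ k < n, Go G r (S k) c (S (k + 1))) : Go G r (S 0) (n * c) (S n) := by
  induction n with
  | zero => simpa using Go.refl (S 0)
  | succ n ih =>
    have := (ih fun k hk => h k (by omega)).trans (h n (by omega))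
    rwa [add_mul, one_mul]

end Go

abbrev ZV (d ℓ : ℕ) := Fin d ⊕ (Fin d ⊕ Fin ℓ)

/-- Light-red nodes / dark-red nodes / blue nodes of a state described by predicates on indices. -/
def zset (d ℓ : ℕ) (P Q R : ℕ → Prop) : ZV d ℓ → Prop
  | .inl m => P m
  | .inr (.inl m) => Q m
  | .inr (.inr i) => R i

def zmark (d ℓ : ℕ) (MA MB : ℕ → ℕ → Prop) (MC : ℕ → Prop) : ZV d ℓ × ZV d ℓ → Prop
  | (.inl m, .inr (.inr i)) => (i : ℕ) % 2 = 0 ∧ MA m i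
  | (.inr (.inl m), .inr (.inr i)) => (i : ℕ) % 2 = 1 ∧ MB m i
  | (.inr (.inr j), .inr (.inr i)) => (j : ℕ) + 1 = i ∧ MC i
  | _ => False

noncomputable def St (d ℓ : ℕ) (LA LB LC DC BC : ℕ → Prop) (MA MB : ℕ → ℕ → Prop)
    (MC : ℕ → Prop) : PRBPState (ZV d ℓ) :=
  ⟨Finset.univ.filter (zset d ℓ LA LB LC),
   Finset.univ.filter (zset d ℓ (fun _ => False) (fun _ => False) DC),
   Finset.univ.filter (zset d ℓ (fun _ => True) (fun _ => True) BC),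
   Finset.univ.filter (zmark d ℓ MA MB MC)⟩

lemma eq_St {d ℓ : ℕ} {LA LB LC DC BC : ℕ → Prop} {MA MB : ℕ → ℕ → Prop}
    {MC : ℕ → Prop} {s : PRBPState (ZV d ℓ)}
    (h1 : ∀ v, v ∈ s.lred ↔ zset d ℓ LA LB LC v)
    (h2 : ∀ v, v ∈ s.dred ↔ zset d ℓ (fun _ => False) (fun _ => False) DC v)
    (h3 : ∀ v, v ∈ s.blue ↔ zset d ℓ (fun _ => True) (fun _ => True) BC v)
    (h4 : ∀ p, p ∈ s.marked ↔ zmark d ℓ MA MB MC p) :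
    s = St d ℓ LA LB LC DC BC MA MB MC := by
  obtain ⟨a, b, c, e⟩ := s
  simp only [St, PRBPState.mk.injEq]
  refine ⟨?_, ?_, ?_, ?_⟩ <;> ext v <;> simp only [Finset.mem_filter, Finset.mem_univ, true_and]
  exacts [h1 v, h2 v, h3 v, h4 v]

lemma cardA {d ℓ : ℕ} (x y : ZV d ℓ) (s : Finset (ZV d ℓ))
    (h : ∀ v ∈ s, v = x ∨ v = y ∨ ∃ m : Fin d, v = .inl m) : s.card ≤ d + 2 := by
  have : s ⊆ insert x (insert y (Finset.univ.image (Sum.inl : Fin d → ZV d ℓ))) := by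
    intro v hv
    rcases h v hv with h | h | ⟨m, h⟩ <;> simp [h]
  refine (Finset.card_le_card this).trans ?_
  have h1 := Finset.card_insert_le x (insert y (Finset.univ.image (Sum.inl : Fin d → ZV d ℓ)))
  have h2 := Finset.card_insert_le y (Finset.univ.image (Sum.inl : Fin d → ZV d ℓ))
  have h3 : (Finset.univ.image (Sum.inl : Fin d → ZV d ℓ)).card ≤ d :=
    Finset.card_image_le.trans (by simp)
  omega

lemma cardB {d ℓ : ℕ} (x y : ZV d ℓ) (s : Finset (ZV d ℓ))
    (h : ∀ v ∈ s, v = x ∨ v = y ∨ ∃ m : Fin d, v = .inr (.inl m)) : s.card ≤ d + 2 := by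
  have : s ⊆ insert x (insert y
      (Finset.univ.image (fun m : Fin d => (Sum.inr (Sum.inl m) : ZV d ℓ)))) := by
    intro v hv
    rcases h v hv with h | h | ⟨m, h⟩ <;> simp [h]
  refine (Finset.card_le_card this).trans ?_
  have h1 := Finset.card_insert_le x (insert y
    (Finset.univ.image (fun m : Fin d => (Sum.inr (Sum.inl m) : ZV d ℓ))))
  have h2 := Finset.card_insert_le y
    (Finset.univ.image (fun m : Fin d => (Sum.inr (Sum.inl m) : ZV d ℓ)))
  have h3 : (Finset.univ.image (fun m : Fin d => (Sum.inr (Sum.inl m) : ZV d ℓ))).card ≤ d :=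
    Finset.card_image_le.trans (by simp)
  omega

noncomputable def P1 (d ℓ j : ℕ) : PRBPState (ZV d ℓ) :=
  St d ℓ (fun m => m < j) (fun _ => False) (fun _ => False) (fun _ => False) (fun _ => False)
    (fun _ _ => False) (fun _ _ => False) (fun _ => False)

noncomputable def P2 (d ℓ k : ℕ) : PRBPState (ZV d ℓ) :=
  St d ℓ (fun _ => True) (fun _ => False) (fun _ => False) (fun _ => False)
    (fun i => i % 2 = 0 ∧ i < k)
    (fun _ i => i < k) (fun _ _ => False) (fun _ => False)

noncomputable def P2i (d ℓ k j : ℕ) : PRBPState (ZV d ℓ) :=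
  St d ℓ (fun _ => True) (fun _ => False) (fun _ => False) (fun i => i = k ∧ 0 < j)
    (fun i => i % 2 = 0 ∧ i < k)
    (fun m i => i < k ∨ (i = k ∧ m < j)) (fun _ _ => False) (fun _ => False)

noncomputable def P2s (d ℓ k : ℕ) : PRBPState (ZV d ℓ) :=
  St d ℓ (fun _ => True) (fun _ => False) (fun i => i = k) (fun _ => False)
    (fun i => i % 2 = 0 ∧ i < k + 1)
    (fun _ i => i < k + 1) (fun _ _ => False) (fun _ => False)

noncomputable def P3 (d ℓ j : ℕ) : PRBPState (ZV d ℓ) :=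
  St d ℓ (fun m => j ≤ m) (fun _ => False) (fun _ => False) (fun _ => False)
    (fun i => i % 2 = 0)
    (fun _ _ => True) (fun _ _ => False) (fun _ => False)

noncomputable def P4 (d ℓ j : ℕ) : PRBPState (ZV d ℓ) :=
  St d ℓ (fun _ => False) (fun m => m < j) (fun _ => False) (fun _ => False)
    (fun i => i % 2 = 0)
    (fun _ _ => True) (fun _ _ => False) (fun _ => False)

noncomputable def P5 (d ℓ k : ℕ) : PRBPState (ZV d ℓ) :=
  St d ℓ (fun _ => False) (fun _ => True) (fun i => i = 0 ∧ k = 0) (fun i => i = k ∧ 0 < k)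
    (fun i => i % 2 = 0 ∧ (k < i ∨ i = 0))
    (fun _ _ => True) (fun _ i => i ≤ k) (fun i => i ≤ k)

/-- odd step: after `c_k → c_{k+1}` and `j` of the `B`-edges. -/
noncomputable def P5o (d ℓ k j : ℕ) : PRBPState (ZV d ℓ) :=
  St d ℓ (fun _ => False) (fun _ => True) (fun i => i = 0 ∧ k = 0)
    (fun i => (i = k ∧ 0 < k) ∨ i = k + 1)
    (fun i => i % 2 = 0 ∧ (k + 1 < i ∨ i = 0))
    (fun _ _ => True) (fun m i => i ≤ k ∨ (i = k + 1 ∧ m < j)) (fun i => i ≤ k + 1)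

/-- even step: after loading `c_{k+1}`. -/
noncomputable def P5e (d ℓ k : ℕ) : PRBPState (ZV d ℓ) :=
  St d ℓ (fun _ => False) (fun _ => True) (fun i => (i = 0 ∧ k = 0) ∨ i = k + 1)
    (fun i => i = k ∧ 0 < k)
    (fun i => i % 2 = 0 ∧ (k < i ∨ i = 0))
    (fun _ _ => True) (fun _ i => i ≤ k) (fun i => i ≤ k)

noncomputable def P5r (d ℓ k : ℕ) : PRBPState (ZV d ℓ) :=
  St d ℓ (fun _ => False) (fun _ => True) (fun i => i = 0 ∧ k = 0)
    (fun i => (i = k ∧ 0 < k) ∨ i = k + 1)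
    (fun i => i % 2 = 0 ∧ (k + 1 < i ∨ i = 0))
    (fun _ _ => True) (fun _ i => i ≤ k + 1) (fun i => i ≤ k + 1)

noncomputable def P6 (d ℓ : ℕ) : PRBPState (ZV d ℓ) :=
  St d ℓ (fun _ => False) (fun _ => True) (fun i => i = ℓ - 1)
    (fun _ => False)
    (fun i => i = 0 ∨ i = ℓ - 1)
    (fun _ _ => True) (fun _ _ => True) (fun _ => True)

lemma go1 {d ℓ j : ℕ} (hj : j < d) : Go (ZipG d ℓ) (d + 2) (P1 d ℓ j) 1 (P1 d ℓ (j + 1)) := by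
  refine Go.single (.load (.inl ⟨j, hj⟩)) ⟨by simp [P1, St, zset], ?_, ?_⟩
  · apply cardA (.inl ⟨j, hj⟩) (.inl ⟨j, hj⟩)
    rintro (m | m | i) <;> simp [P1, St, zset]
  · symm
    apply eq_St
    · rintro (m | m | i) <;> simp [P1, St, zset, Fin.ext_iff]; omega
    · rintro (m | m | i) <;> simp [P1, St, zset]
    · rintro (m | m | i) <;> simp [P1, St, zset]
    · rintro ⟨m | m | i, m' | m' | i'⟩ <;> simp [P1, St, zmark]

lemma go2 {d ℓ k j : ℕ} (hj : j < d) (hk : k < ℓ) (he : k % 2 = 0) :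
    Go (ZipG d ℓ) (d + 2) (P2i d ℓ k j) 0 (P2i d ℓ k (j + 1)) := by
  refine Go.single (.pcompute (.inl ⟨j, hj⟩) (.inr (.inr ⟨k, hk⟩)))
    ⟨by simpa [ZipG], by simp [P2i, St, zmark], ?_, by simp [P2i, St, zset, PRBPState.red], ?_,
      ?_, ?_⟩
  · rintro (m | m | i) <;> simp [ZipG]
  · simp [P2i, St, zset, PRBPState.red]; omega
  · apply cardA (.inr (.inr ⟨k, hk⟩)) (.inr (.inr ⟨k, hk⟩))
    rintro (m | m | i) <;> simp [P2i, St, zset, Fin.ext_iff]; omega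
  · symm
    apply eq_St
    · rintro (m | m | i) <;> simp [P2i, St, zset]
    · rintro (m | m | i) <;> simp [P2i, St, zset, Fin.ext_iff]; omega
    · rintro (m | m | i) <;> simp [P2i, St, zset, Fin.ext_iff]
    · rintro ⟨m | m | i, m' | m' | i'⟩ <;> simp [P2i, St, zmark, Fin.ext_iff]; omega

lemma go2s {d ℓ k : ℕ} (hd : 3 ≤ d) (hk : k < ℓ) (he : k % 2 = 0) :
    Go (ZipG d ℓ) (d + 2) (P2i d ℓ k d) 1 (P2s d ℓ k) := by
  refine Go.single (.save (.inr (.inr ⟨k, hk⟩))) ⟨by simp [P2i, St, zset]; omega, ?_⟩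
  symm
  apply eq_St
  · rintro (m | m | i) <;> simp [P2i, St, zset, Fin.ext_iff]
  · rintro (m | m | i) <;> simp [P2i, St, zset, Fin.ext_iff]; omega
  · rintro (m | m | i) <;> simp [P2i, St, zset, Fin.ext_iff]; omega
  · rintro ⟨m | m | i, m' | m' | i'⟩ <;> simp [P2i, St, zmark]; omega

lemma go2d {d ℓ k : ℕ} (hk : k < ℓ) :
    Go (ZipG d ℓ) (d + 2) (P2s d ℓ k) 0 (P2 d ℓ (k + 1)) := by
  refine Go.single (.delete (.inr (.inr ⟨k, hk⟩))) (Or.inl ⟨by simp [P2s, St, zset], ?_⟩)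
  symm
  apply eq_St
  · rintro (m | m | i) <;> simp [P2s, St, zset, Fin.ext_iff]
  · rintro (m | m | i) <;> simp [P2s, St, zset]
  · rintro (m | m | i) <;> simp [P2s, St, zset]
  · rintro ⟨m | m | i, m' | m' | i'⟩ <;> simp [P2s, St, zmark]

lemma go2all {d ℓ k : ℕ} (hd : 3 ≤ d) (hk : k < ℓ) :
    Go (ZipG d ℓ) (d + 2) (P2 d ℓ k) 1 (P2 d ℓ (k + 1)) := by
  rcases Nat.mod_two_eq_zero_or_one k with he | he
  · have h0 : P2 d ℓ k = P2i d ℓ k 0 := by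
      apply eq_St
      · rintro (m | m | i) <;> simp [P2, St, zset]
      · rintro (m | m | i) <;> simp [P2, St, zset]
      · rintro (m | m | i) <;> simp [P2, St, zset]
      · rintro ⟨m | m | i, m' | m' | i'⟩ <;> simp [P2, St, zmark]
    have h1 := Go.iter (G := ZipG d ℓ) (r := d + 2) (P2i d ℓ k) 0 d (fun j hj => go2 hj hk he)
    rw [h0]
    exact ((h1.trans (go2s hd hk he)).trans (go2d hk)).mono (by omega)
  · have h0 : P2 d ℓ k = P2 d ℓ (k + 1) := by
      apply eq_St
      · rintro (m | m | i) <;> simp [P2, St, zset]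
      · rintro (m | m | i) <;> simp [P2, St, zset]
      · rintro (m | m | i) <;> simp [P2, St, zset]; omega
      · rintro ⟨m | m | i, m' | m' | i'⟩ <;> simp [P2, St, zmark]; omega
    rw [← h0]
    exact (Go.refl _).mono (by omega)

lemma go3 {d ℓ j : ℕ} (hj : j < d) : Go (ZipG d ℓ) (d + 2) (P3 d ℓ j) 0 (P3 d ℓ (j + 1)) := by
  refine Go.single (.delete (.inl ⟨j, hj⟩)) (Or.inl ⟨by simp [P3, St, zset], ?_⟩)
  symm
  apply eq_St
  · rintro (m | m | i) <;> simp [P3, St, zset, Fin.ext_iff]; omega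
  · rintro (m | m | i) <;> simp [P3, St, zset]
  · rintro (m | m | i) <;> simp [P3, St, zset]
  · rintro ⟨m | m | i, m' | m' | i'⟩ <;> simp [P3, St, zmark]

lemma go4 {d ℓ j : ℕ} (hj : j < d) : Go (ZipG d ℓ) (d + 2) (P4 d ℓ j) 1 (P4 d ℓ (j + 1)) := by
  refine Go.single (.load (.inr (.inl ⟨j, hj⟩))) ⟨by simp [P4, St, zset], ?_, ?_⟩
  · apply cardB (.inr (.inl ⟨j, hj⟩)) (.inr (.inl ⟨j, hj⟩))
    rintro (m | m | i) <;> simp [P4, St, zset]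
  · symm
    apply eq_St
    · rintro (m | m | i) <;> simp [P4, St, zset, Fin.ext_iff]; omega
    · rintro (m | m | i) <;> simp [P4, St, zset]
    · rintro (m | m | i) <;> simp [P4, St, zset]
    · rintro ⟨m | m | i, m' | m' | i'⟩ <;> simp [P4, St, zmark]

lemma go45 {d ℓ : ℕ} (hℓ : 2 ≤ ℓ) : Go (ZipG d ℓ) (d + 2) (P4 d ℓ d) 1 (P5 d ℓ 0) := by
  refine Go.single (.load (.inr (.inr ⟨0, by omega⟩))) ⟨by simp [P4, St, zset], ?_, ?_⟩
  · apply cardB (.inr (.inr ⟨0, by omega⟩)) (.inr (.inr ⟨0, by omega⟩))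
    rintro (m | m | i) <;> simp [P4, St, zset]
  · symm
    apply eq_St
    · rintro (m | m | i) <;> simp [P4, St, zset, Fin.ext_iff]
    · rintro (m | m | i) <;> simp [P4, St, zset]
    · rintro (m | m | i) <;> simp [P4, St, zset]; omega
    · rintro ⟨m | m | i, m' | m' | i'⟩ <;> simp [P4, St, zmark] <;> omega

lemma go5o0 {d ℓ k : ℕ} (hk : k + 1 < ℓ) (ho : (k + 1) % 2 = 1) :
    Go (ZipG d ℓ) (d + 2) (P5 d ℓ k) 0 (P5o d ℓ k 0) := by
  refine Go.single (.pcompute (.inr (.inr ⟨k, by omega⟩)) (.inr (.inr ⟨k + 1, hk⟩)))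
    ⟨by simp [ZipG], by simp [P5, St, zmark], ?_, ?_, ?_, ?_, ?_⟩
  · rintro (m | m | i) <;> simp [ZipG, P5, St, zmark]
  · simp [P5, St, zset, PRBPState.red]; omega
  · simp [P5, St, zset, PRBPState.red]; omega
  · apply cardB (.inr (.inr ⟨k, by omega⟩)) (.inr (.inr ⟨k + 1, hk⟩))
    rintro (m | m | i) <;> simp [P5, St, zset, Fin.ext_iff]; omega
  · symm
    apply eq_St
    · rintro (m | m | i) <;> simp [P5, St, zset, Fin.ext_iff]
    · rintro (m | m | i) <;> simp [P5, St, zset, Fin.ext_iff]; omega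
    · rintro (m | m | i) <;> simp [P5, St, zset, Fin.ext_iff]; omega
    · rintro ⟨m | m | i, m' | m' | i'⟩ <;> simp [P5, St, zmark, Fin.ext_iff]; omega

lemma go5o {d ℓ k j : ℕ} (hj : j < d) (hk : k + 1 < ℓ) (ho : (k + 1) % 2 = 1) :
    Go (ZipG d ℓ) (d + 2) (P5o d ℓ k j) 0 (P5o d ℓ k (j + 1)) := by
  refine Go.single (.pcompute (.inr (.inl ⟨j, hj⟩)) (.inr (.inr ⟨k + 1, hk⟩)))
    ⟨by simpa [ZipG], by simp [P5o, St, zmark], ?_, by simp [P5o, St, zset, PRBPState.red], ?_,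
      ?_, ?_⟩
  · rintro (m | m | i) <;> simp [ZipG]
  · simp [P5o, St, zset, PRBPState.red]
  · apply cardB (.inr (.inr ⟨k, by omega⟩)) (.inr (.inr ⟨k + 1, hk⟩))
    rintro (m | m | i) <;> simp [P5o, St, zset, Fin.ext_iff]; omega
  · symm
    apply eq_St
    · rintro (m | m | i) <;> simp [P5o, St, zset, Fin.ext_iff]
    · rintro (m | m | i) <;> simp [P5o, St, zset, Fin.ext_iff]
    · rintro (m | m | i) <;> simp [P5o, St, zset, Fin.ext_iff]
    · rintro ⟨m | m | i, m' | m' | i'⟩ <;> simp [P5o, St, zmark, Fin.ext_iff]; omega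

lemma go5e {d ℓ k : ℕ} (hk : k + 1 < ℓ) (he : (k + 1) % 2 = 0) :
    Go (ZipG d ℓ) (d + 2) (P5 d ℓ k) 1 (P5e d ℓ k) := by
  refine Go.single (.load (.inr (.inr ⟨k + 1, hk⟩))) ⟨by simp [P5, St, zset]; omega, ?_, ?_⟩
  · apply cardB (.inr (.inr ⟨k, by omega⟩)) (.inr (.inr ⟨k + 1, hk⟩))
    rintro (m | m | i) <;> simp [P5, St, zset, Fin.ext_iff]; omega
  · symm
    apply eq_St
    · rintro (m | m | i) <;> simp [P5, St, zset, Fin.ext_iff]; omega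
    · rintro (m | m | i) <;> simp [P5, St, zset]
    · rintro (m | m | i) <;> simp [P5, St, zset]
    · rintro ⟨m | m | i, m' | m' | i'⟩ <;> simp [P5, St, zmark]

lemma go5er {d ℓ k : ℕ} (hk : k + 1 < ℓ) (he : (k + 1) % 2 = 0) :
    Go (ZipG d ℓ) (d + 2) (P5e d ℓ k) 0 (P5r d ℓ k) := by
  refine Go.single (.pcompute (.inr (.inr ⟨k, by omega⟩)) (.inr (.inr ⟨k + 1, hk⟩)))
    ⟨by simp [ZipG], by simp [P5e, St, zmark], ?_, ?_, ?_, ?_, ?_⟩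
  · rintro (m | m | i) <;> simp [ZipG, P5e, St, zmark]
  · simp [P5e, St, zset, PRBPState.red]; omega
  · simp [P5e, St, zset, PRBPState.red]
  · apply cardB (.inr (.inr ⟨k, by omega⟩)) (.inr (.inr ⟨k + 1, hk⟩))
    rintro (m | m | i) <;> simp [P5e, St, zset, Fin.ext_iff]; omega
  · symm
    apply eq_St
    · rintro (m | m | i) <;> simp [P5e, St, zset, Fin.ext_iff]; omega
    · rintro (m | m | i) <;> simp [P5e, St, zset, Fin.ext_iff]; omega
    · rintro (m | m | i) <;> simp [P5e, St, zset, Fin.ext_iff]; omega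
    · rintro ⟨m | m | i, m' | m' | i'⟩ <;> simp [P5e, St, zmark, Fin.ext_iff] <;> omega

lemma go5d {d ℓ k : ℕ} (hk : k + 1 < ℓ) :
    Go (ZipG d ℓ) (d + 2) (P5r d ℓ k) 0 (P5 d ℓ (k + 1)) := by
  refine Go.single (.delete (.inr (.inr ⟨k, by omega⟩))) ?_
  rcases Nat.eq_zero_or_pos k with h0 | h0
  · refine Or.inl ⟨by simp [P5r, St, zset]; omega, ?_⟩
    symm
    apply eq_St
    · rintro (m | m | i) <;> simp [P5r, St, zset, Fin.ext_iff]; omega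
    · rintro (m | m | i) <;> simp [P5r, St, zset]; omega
    · rintro (m | m | i) <;> simp [P5r, St, zset]
    · rintro ⟨m | m | i, m' | m' | i'⟩ <;> simp [P5r, St, zmark]
  · refine Or.inr ⟨by simp [P5r, St, zset]; omega, ?_, ?_⟩
    · rintro (m | m | i) <;> simp [ZipG, P5r, St, zmark]; omega
    symm
    apply eq_St
    · rintro (m | m | i) <;> simp [P5r, St, zset]; omega
    · rintro (m | m | i) <;> simp [P5r, St, zset, Fin.ext_iff]; omega
    · rintro (m | m | i) <;> simp [P5r, St, zset]
    · rintro ⟨m | m | i, m' | m' | i'⟩ <;> simp [P5r, St, zmark]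

lemma go5all {d ℓ k : ℕ} (hk : k + 1 < ℓ) :
    Go (ZipG d ℓ) (d + 2) (P5 d ℓ k) 1 (P5 d ℓ (k + 1)) := by
  rcases Nat.mod_two_eq_zero_or_one (k + 1) with he | he
  · exact (((go5e hk he).trans (go5er hk he)).trans (go5d hk)).mono (by omega)
  · have h0 : P5o d ℓ k d = P5r d ℓ k := by
      apply eq_St
      · rintro (m | m | i) <;> simp [P5o, St, zset]
      · rintro (m | m | i) <;> simp [P5o, St, zset]
      · rintro (m | m | i) <;> simp [P5o, St, zset]
      · rintro ⟨m | m | i, m' | m' | i'⟩ <;> simp [P5o, St, zmark]; omega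
    have h1 := Go.iter (G := ZipG d ℓ) (r := d + 2) (P5o d ℓ k) 0 d (fun j hj => go5o hj hk he)
    rw [h0] at h1
    exact (((go5o0 hk he).trans h1).trans (go5d hk)).mono (by omega)

lemma go6 {d ℓ : ℕ} (hℓ : 2 ≤ ℓ) : Go (ZipG d ℓ) (d + 2) (P5 d ℓ (ℓ - 1)) 1 (P6 d ℓ) := by
  refine Go.single (.save (.inr (.inr ⟨ℓ - 1, by omega⟩))) ⟨by simp [P5, St, zset]; omega, ?_⟩
  symm
  apply eq_St
  · rintro (m | m | i) <;> simp [P5, St, zset, Fin.ext_iff]; omega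
  · rintro (m | m | i) <;> simp [P5, St, zset, Fin.ext_iff]; omega
  · rintro (m | m | i) <;> simp [P5, St, zset, Fin.ext_iff]; omega
  · rintro ⟨m | m | i, m' | m' | i'⟩ <;> simp [P5, St, zmark] <;> omega

lemma zip_upper {d ℓ : ℕ} (hd : 3 ≤ d) (hℓ : 2 ≤ ℓ) :
    ∃ L, PRBPValid (ZipG d ℓ) (d + 2) L ∧ PRBPCost L ≤ 2 * ℓ + 3 * d := by
  have e0 : PRBPInit (ZipG d ℓ) = P1 d ℓ 0 := by
    apply eq_St
    · rintro (m | m | i) <;> simp [PRBPInit, zset]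
    · rintro (m | m | i) <;> simp [PRBPInit, zset]
    · rintro (m | m | i)
      · simp [PRBPInit, zset, DirGraph.IsSource, ZipG]
      · simp [PRBPInit, zset, DirGraph.IsSource, ZipG]
      · simp only [zset, iff_false]
        intro hi
        have hi := (Finset.mem_filter.1 hi).2
        rcases Nat.mod_two_eq_zero_or_one (i : ℕ) with h | h
        · exact hi (Sum.inl ⟨0, by omega⟩) (by simpa [ZipG] using h)
        · exact hi (Sum.inr (Sum.inl ⟨0, by omega⟩)) (by simpa [ZipG] using h)
    · rintro ⟨m | m | i, m' | m' | i'⟩ <;> simp [PRBPInit, zmark]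
  have e1 : P1 d ℓ d = P2 d ℓ 0 := by
    apply eq_St
    · rintro (m | m | i) <;> simp [P1, St, zset]
    · rintro (m | m | i) <;> simp [P1, St, zset]
    · rintro (m | m | i) <;> simp [P1, St, zset]
    · rintro ⟨m | m | i, m' | m' | i'⟩ <;> simp [P1, St, zmark]
  have e2 : P2 d ℓ ℓ = P3 d ℓ 0 := by
    apply eq_St
    · rintro (m | m | i) <;> simp [P2, St, zset]
    · rintro (m | m | i) <;> simp [P2, St, zset]
    · rintro (m | m | i) <;> simp [P2, St, zset]
    · rintro ⟨m | m | i, m' | m' | i'⟩ <;> simp [P2, St, zmark]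
  have e3 : P3 d ℓ d = P4 d ℓ 0 := by
    apply eq_St
    · rintro (m | m | i) <;> simp [P3, St, zset]
    · rintro (m | m | i) <;> simp [P3, St, zset]
    · rintro (m | m | i) <;> simp [P3, St, zset]
    · rintro ⟨m | m | i, m' | m' | i'⟩ <;> simp [P3, St, zmark]
  have h1 := Go.iter (G := ZipG d ℓ) (r := d + 2) (P1 d ℓ) 1 d (fun j hj => go1 hj)
  have h2 := Go.iter (G := ZipG d ℓ) (r := d + 2) (P2 d ℓ) 1 ℓ (fun j hj => go2all hd hj)
  have h3 := Go.iter (G := ZipG d ℓ) (r := d + 2) (P3 d ℓ) 0 d (fun j hj => go3 hj)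
  have h4 := Go.iter (G := ZipG d ℓ) (r := d + 2) (P4 d ℓ) 1 d (fun j hj => go4 hj)
  have h5 := Go.iter (G := ZipG d ℓ) (r := d + 2) (P5 d ℓ) 1 (ℓ - 1)
    (fun j hj => go5all (by omega))
  rw [e1] at h1
  rw [e2] at h2
  rw [e3] at h3
  obtain ⟨L, hL, hc⟩ := (((((h1.trans h2).trans h3).trans h4).trans (go45 hℓ)).trans h5).trans
    (go6 hℓ)
  refine ⟨L, ⟨P6 d ℓ, by rw [e0]; exact hL, ?_, ?_⟩, by omega⟩
  · rintro (m | m | i) hs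
    · simp [P6, St, zset]
    · simp [P6, St, zset]
    · by_cases hi : (i : ℕ) + 1 < ℓ
      · exact absurd (by simp [ZipG]) (hs (.inr (.inr ⟨i + 1, hi⟩)))
      · simp [P6, St, zset]; omega
  · rintro (m | m | i) (m' | m' | i') <;> simp [ZipG, P6, St, zmark]

/-- for `d ≥ 3`, `r = d + 2` and `ℓ` sufficiently large, the
optimal one-shot RBP cost of the zipper DAG is at least `d·(ℓ − O(1)) − O(d)`,
while there is a PRBP strategy of cost at most `2ℓ + O(d)`; in particular
`OPT_PRBP < OPT_RBP`. -/
theorem zipper_gadget :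
    ∃ c c₀ : ℕ, 0 < c ∧ ∀ d ℓ : ℕ, 3 ≤ d → c₀ ≤ ℓ →
      (((d * (ℓ - c) - c * d : ℕ) : ℕ∞) ≤ optRBP (ZipG d ℓ) (d + 2)) ∧
      (∃ L, PRBPValid (ZipG d ℓ) (d + 2) L ∧ PRBPCost L ≤ 2 * ℓ + c * d) ∧
      optPRBP (ZipG d ℓ) (d + 2) < optRBP (ZipG d ℓ) (d + 2) := by
  refine ⟨3, 13, by norm_num, fun d ℓ hd hℓ => ?_⟩
  have hlow := zip_lower (d := d) (ℓ := ℓ) hd (by omega)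
  obtain ⟨L, hL, hc⟩ := zip_upper (d := d) (ℓ := ℓ) hd (by omega)
  refine ⟨le_trans ?_ hlow, ⟨L, hL, hc⟩, ?_⟩
  · have : d * (ℓ - 3) ≤ d * (ℓ - 1) := Nat.mul_le_mul_left _ (by omega)
    exact_mod_cast (Nat.sub_le _ _).trans this
  · have h1 : optPRBP (ZipG d ℓ) (d + 2) ≤ ((PRBPCost L : ℕ) : ℕ∞) := sInf_le ⟨L, hL, rfl⟩
    refine lt_of_le_of_lt h1 (lt_of_lt_of_le ?_ hlow)
    have : PRBPCost L < d * (ℓ - 1) := by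
      obtain ⟨e, rfl⟩ : ∃ e, ℓ = e + 13 := ⟨ℓ - 13, by omega⟩
      have h12 : e + 13 - 1 = e + 12 := by omega
      rw [h12]
      nlinarith
    exact_mod_cast this
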